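/- Let p be a prime, ℓ ≥ 1, and let f be a nonzero nilpotent periodic sequence in Z_{p^ℓ} with leading component e_γ of its generating vector. Then there exists T such that for all t ≥ T, the period of ∑_{i=0}^{t} Σ^i f equals the period of Σ^{t+γ}[e_γ]. -/

import Mathlib

/-- The shift operator `θ`: `θ f n = f (n+1)`. -/
def shiftSeq {M : ℕ} (f : ℕ → ZMod M) : ℕ → ZMod M := fun n => f (n + 1)

/-- The difference operator `Δ = θ - id`: `Δ f n = f (n+1) - f n`. -/
def deltaSeq {M : ℕ} (f : ℕ → ZMod M) : ℕ → ZMod M := fun n => f (n + 1) - f n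

/-- A sequence is periodic if `θ^j f = f` for some `j ≥ 1`. -/
def IsPeriodicSeq {M : ℕ} (f : ℕ → ZMod M) : Prop := ∃ j, 1 ≤ j ∧ Function.Periodic f j

/-- The period `τ(f)`: the least `j ≥ 1` with `θ^j f = f`. -/
noncomputable def perSeq {M : ℕ} (f : ℕ → ZMod M) : ℕ :=
  sInf {j | 1 ≤ j ∧ Function.Periodic f j}

/-- The trace `tr f = ∑_{i=0}^{τ(f)-1} f i`. -/
noncomputable def trSeq {M : ℕ} (f : ℕ → ZMod M) : ZMod M :=
  ∑ i ∈ Finset.range (perSeq f), f i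

/-- The sum operator `Σ`: `Σf(0) = 0`, `Σf(n) = f(n-1) + Σf(n-1)`. -/
def sigmaSeq {M : ℕ} (f : ℕ → ZMod M) : ℕ → ZMod M
  | 0 => 0
  | n + 1 => f n + sigmaSeq f n

/-- A sequence is nilpotent if `Δ^η f = 0` for some `η ≥ 1`. -/
def IsNilpotentSeq {M : ℕ} (f : ℕ → ZMod M) : Prop := ∃ η, 1 ≤ η ∧ deltaSeq^[η] f = 0

/-- A sequence is idempotent if `Δ^η f = f` for some `η ≥ 1`. -/
def IsIdempotentSeq {M : ℕ} (f : ℕ → ZMod M) : Prop := ∃ η, 1 ≤ η ∧ deltaSeq^[η] f = f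

/-- The nilpotency index: the least `η ≥ 1` with `Δ^η f = 0`. -/
noncomputable def nilIndex {M : ℕ} (f : ℕ → ZMod M) : ℕ :=
  sInf {η | 1 ≤ η ∧ deltaSeq^[η] f = 0}

/-- The idempotency index: the least `η ≥ 1` with `Δ^η f = f`. -/
noncomputable def idemIndex {M : ℕ} (f : ℕ → ZMod M) : ℕ :=
  sInf {η | 1 ≤ η ∧ deltaSeq^[η] f = f}

/-- The `p`-adic valuation on `ZMod M`, with `ν(0) = ∞`. -/
noncomputable def nuVal (p : ℕ) {M : ℕ} (a : ZMod M) : ℕ∞ :=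
  if a = 0 then ⊤ else (padicValNat p a.val : ℕ∞)

/-- `Double(f, q^t)`: repeat `q` times each successive `q^t`-subsequence of `f`. -/
def DoubleSeq {M : ℕ} (f : ℕ → ZMod M) (q t : ℕ) : ℕ → ZMod M :=
  fun n => f ((n / q ^ (t + 1)) * q ^ t + n % q ^ t)

/-- `Alt(f, q^t)`: alternate `(q-1)q^t` zeros with the successive `q^t`-subsequences of `f`. -/
def AltSeq {M : ℕ} (f : ℕ → ZMod M) (q t : ℕ) : ℕ → ZMod M :=
  fun n => if (n / q ^ t) % q = q - 1 then f ((n / q ^ (t + 1)) * q ^ t + n % q ^ t) else 0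

/-- The binomial sequence `bin_s(n) = C(n,s) mod p^ℓ`. -/
def binSeq (p l : ℕ) (s : ℕ) : ℕ → ZMod (p ^ l) := fun n => (n.choose s : ZMod (p ^ l))

/-- `f ≡_ν g`: zeros coincide, and valuations of nonzero values coincide. -/
def nuEquiv (p : ℕ) {M : ℕ} (f g : ℕ → ZMod M) : Prop :=
  ∀ n, (f n = 0 ↔ g n = 0) ∧ (f n ≠ 0 → padicValNat p (f n).val = padicValNat p (g n).val)

/-- `Π_i(f)`: number of entries of valuation `i` in one period of `f`. -/
noncomputable def PiCount (p : ℕ) {M : ℕ} (i : ℕ) (f : ℕ → ZMod M) : ℕ :=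
  ((Finset.range (perSeq f)).filter fun x => f x ≠ 0 ∧ padicValNat p (f x).val = i).card

/-- `Z(f)`: number of zero entries in one period of `f`. -/
noncomputable def ZCount {M : ℕ} (f : ℕ → ZMod M) : ℕ :=
  ((Finset.range (perSeq f)).filter fun x => f x = 0).card

/-- The `j`-th base-`p` digit of `x`. -/
def dig (p x j : ℕ) : ℕ := x / p ^ j % p

/-
Periodicity is governed by `θ^q = (1 + Δ)^q`: `f` has period `q` iff `∑_{i ≥ 1} C(q,i) Δ^i f = 0`.
Suppose the leading component of `f` sits at index `s` and has additive order `p^(m+1)`, let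
`p^L ≤ s < p^(L+1)`, and suppose that the nilpotency index of `f` is not much larger than `s`. For
`q = p^(m+1+L)` each term vanishes: `p^(m+1)` divides `C(q,i)` for `i ≤ s`, while for `i > s` the
smaller power `p^m` still divides `C(q,i)`, as long as `Δ^i f ≠ 0`, and already annihilates `Δ^i f`.
For `q = p^(m+L)`, applying `Δ^(s-p^L)` to the sum kills every term except `C(q,p^L) Δ^s f`, which
is nonzero because `p^m` is the exact power of `p` in `C(q,p^L)`. So the period is `p^(m+1+L)`,
determined by `m` and `s` alone.

As `ΔΣ = id`, both `∑_{i ≤ t} Σ^i f` and `Σ^(t+γ) [e_γ]` have their leading component at `t + γ`,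
with the additive order of `e_γ`, and the excess of the nilpotency index over `t + γ` does not
depend on `t`.
-/

open Function Finset
open scoped fwdDiff

/-! ### Binomial coefficients of prime powers -/

theorem prime_pow_dvd_choose_prime_pow {p : ℕ} (hp : p.Prime) (a : ℕ) {b i : ℕ} (hi : i ≠ 0)
    (hib : i < p ^ (b + 1)) : p ^ a ∣ (p ^ (a + b)).choose i := by
  obtain h | h := lt_or_ge (p ^ (a + b)) i
  · simp [Nat.choose_eq_zero_of_lt h]
  have hsum := Nat.factorization_choose_prime_pow_add_factorization hp h hi
  have hfac : i.factorization p < b + 1 :=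
    (Nat.pow_lt_pow_iff_right hp.one_lt).1 ((Nat.ordProj_le p hi).trans_lt hib)
  exact (hp.pow_dvd_iff_le_factorization (Nat.choose_pos h).ne').2 (by omega)

theorem not_prime_pow_succ_dvd_choose_prime_pow {p : ℕ} (hp : p.Prime) (a b : ℕ) :
    ¬ p ^ (a + 1) ∣ (p ^ (a + b)).choose (p ^ b) := by
  have hle : p ^ b ≤ p ^ (a + b) := Nat.pow_le_pow_right hp.pos (Nat.le_add_left b a)
  rw [hp.pow_dvd_iff_le_factorization (Nat.choose_pos hle).ne',
    Nat.factorization_choose_prime_pow hp hle (pow_ne_zero _ hp.ne_zero), hp.factorization_pow,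
    Finsupp.single_eq_same]
  omega

/-! ### Forward differences and periods -/

section ForwardDifference

variable {M A : Type*} [AddCommMonoid M] [AddCommGroup A]

theorem fwdDiff_iter_zero (h : M) (k : ℕ) : Δ_[h] ^[k] (0 : M → A) = 0 :=
  iterate_fixed (fwdDiff_const h 0) k

theorem fwdDiff_iter_eq_zero_of_le {h : M} {f : M → A} {j k : ℕ} (hf : Δ_[h] ^[j] f = 0)
    (hjk : j ≤ k) : Δ_[h] ^[k] f = 0 := by
  rw [← Nat.sub_add_cancel hjk, iterate_add_apply, hf, fwdDiff_iter_zero]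

theorem smul_fwdDiff_iter_eq_zero_of_dvd {h : M} {f : M → A} {c d k : ℕ} (hdc : d ∣ c)
    (hf : Δ_[h] ^[k] (d • f) = 0) : c • Δ_[h] ^[k] f = 0 := by
  obtain ⟨b, rfl⟩ := hdc
  rw [mul_comm, mul_smul, ← fwdDiff_iter_const_smul, hf, smul_zero]

theorem periodic_nsmul_iff_sum_fwdDiff_eq_zero (h : M) (f : M → A) (q : ℕ) :
    Periodic f (q • h) ↔ ∑ i ∈ range q, q.choose (i + 1) • Δ_[h] ^[i + 1] f = 0 := by
  rw [funext_iff]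
  refine forall_congr' fun n ↦ ?_
  rw [shift_eq_sum_fwdDiff_iter h f, sum_range_succ']
  simp

theorem eq_zero_of_forall_fwdDiff_iter_apply_zero {f : ℕ → A}
    (hf : ∀ k, Δ_[1] ^[k] f 0 = 0) : f = 0 := by
  funext n
  simpa [hf] using shift_eq_sum_fwdDiff_iter 1 f n 0

end ForwardDifference

/-! ### Leading components -/

section Leading

variable {A : Type*} [AddCommGroup A] {p m s : ℕ} {f g : ℕ → A}

/-- The leading component of the generating vector of `f` has index `s` and additive order
`p ^ (m + 1)`; it is what determines the period of `f`. In `ZMod (p ^ l)` the order says that its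
valuation is `l - 1 - m`. The conditions on the entries of the vector are encoded as operator
identities: `p ^ (m + 1)` annihilates `f`, and `p ^ m • f` is nilpotent of index `s + 1`. -/
structure HasLeadingIndex (p m s : ℕ) (f : ℕ → A) : Prop where
  pow_succ_smul : p ^ (m + 1) • f = 0
  fwdDiff_smul_eq_zero : Δ_[1] ^[s + 1] (p ^ m • f) = 0
  fwdDiff_smul_ne_zero : Δ_[1] ^[s] (p ^ m • f) ≠ 0

namespace HasLeadingIndex

theorem choose_smul_fwdDiff_eq_zero_of_lt (hp : p.Prime) (hf : HasLeadingIndex p m s f)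
    {b i : ℕ} (hi : i ≠ 0) (hib : i < p ^ (b + 1)) (k : ℕ) :
    (p ^ (m + 1 + b)).choose i • Δ_[1] ^[k] f = 0 :=
  smul_fwdDiff_iter_eq_zero_of_dvd (prime_pow_dvd_choose_prime_pow hp (m + 1) hi hib) <| by
    rw [hf.pow_succ_smul, fwdDiff_iter_zero]

theorem choose_smul_fwdDiff_eq_zero_of_index_lt (hp : p.Prime) (hf : HasLeadingIndex p m s f)
    {b i k : ℕ} (hi : i ≠ 0) (hib : i < p ^ (b + 1)) (hk : s < k) :
    (p ^ (m + b)).choose i • Δ_[1] ^[k] f = 0 :=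
  smul_fwdDiff_iter_eq_zero_of_dvd (prime_pow_dvd_choose_prime_pow hp m hi hib) <|
    fwdDiff_iter_eq_zero_of_le hf.fwdDiff_smul_eq_zero hk

theorem periodic (hp : p.Prime) (hf : HasLeadingIndex p m s f) {K L : ℕ} (hK : Δ_[1] ^[K] f = 0)
    (hs : s < p ^ (L + 1)) (hKL : K ≤ p ^ (L + 2)) : Periodic f (p ^ (m + 1 + L)) := by
  rw [← mul_one (p ^ (m + 1 + L)), ← smul_eq_mul, periodic_nsmul_iff_sum_fwdDiff_eq_zero]
  refine sum_eq_zero fun i _ ↦ ?_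
  obtain his | hsi := le_or_gt (i + 1) s
  · exact hf.choose_smul_fwdDiff_eq_zero_of_lt hp i.succ_ne_zero (by omega) _
  obtain hiK | hKi := lt_or_ge (i + 1) K
  · rw [add_assoc, add_comm 1]
    exact hf.choose_smul_fwdDiff_eq_zero_of_index_lt hp i.succ_ne_zero (hiK.trans_le hKL) hsi
  · rw [fwdDiff_iter_eq_zero_of_le hK hKi, smul_zero]

theorem addOrderOf_fwdDiff (hp : p.Prime) (hf : HasLeadingIndex p m s f) :
    addOrderOf (Δ_[1] ^[s] f) = p ^ (m + 1) := by
  have := Fact.mk hp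
  refine addOrderOf_eq_prime_pow ?_ ?_
  · rw [← fwdDiff_iter_const_smul]
    exact hf.fwdDiff_smul_ne_zero
  · rw [← fwdDiff_iter_const_smul, hf.pow_succ_smul, fwdDiff_iter_zero]

theorem sum_choose_smul_fwdDiff (hp : p.Prime) (hf : HasLeadingIndex p m s f) {K L : ℕ}
    (hK : Δ_[1] ^[K] f = 0) (hLs : p ^ L ≤ s) (hKL : K + p ^ L ≤ p ^ (L + 1) + s) :
    ∑ i ∈ range (p ^ (m + L)), (p ^ (m + L)).choose (i + 1) • Δ_[1] ^[s - p ^ L + (i + 1)] f =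
      (p ^ (m + L)).choose (p ^ L) • Δ_[1] ^[s] f := by
  have hpos : 0 < p ^ L := pow_pos hp.pos L
  have hle : p ^ L ≤ p ^ (m + L) := Nat.pow_le_pow_right hp.pos (Nat.le_add_left L m)
  rw [sum_eq_single_of_mem (p ^ L - 1) (mem_range.2 (by omega)), Nat.sub_add_cancel hpos,
    Nat.sub_add_cancel hLs]
  intro i _ hi
  obtain hiL | hLi := lt_or_ge (i + 1) (p ^ L)
  · obtain _ | b := L
    · simp at hiL
    · rw [add_comm b, ← add_assoc]
      exact hf.choose_smul_fwdDiff_eq_zero_of_lt hp i.succ_ne_zero hiL _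
  obtain hiL' | hLi' := lt_or_ge (i + 1) (p ^ (L + 1))
  · exact hf.choose_smul_fwdDiff_eq_zero_of_index_lt hp i.succ_ne_zero hiL' (by omega)
  · rw [fwdDiff_iter_eq_zero_of_le hK (by omega), smul_zero]

theorem not_periodic (hp : p.Prime) (hf : HasLeadingIndex p m s f) {K L : ℕ}
    (hK : Δ_[1] ^[K] f = 0) (hLs : p ^ L ≤ s) (hKL : K + p ^ L ≤ p ^ (L + 1) + s) :
    ¬ Periodic f (p ^ (m + L)) := by
  rw [← mul_one (p ^ (m + L)), ← smul_eq_mul, periodic_nsmul_iff_sum_fwdDiff_eq_zero]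
  intro hsum
  have hzero : (p ^ (m + L)).choose (p ^ L) • Δ_[1] ^[s] f = 0 := by
    rw [← hf.sum_choose_smul_fwdDiff hp hK hLs hKL]
    simpa only [fwdDiff_iter_finsetSum, fwdDiff_iter_const_smul, ← iterate_add_apply,
      fwdDiff_iter_zero] using congrArg (Δ_[1] ^[s - p ^ L]) hsum
  apply not_prime_pow_succ_dvd_choose_prime_pow hp m L
  rw [← hf.addOrderOf_fwdDiff hp]
  exact addOrderOf_dvd_of_nsmul_eq_zero hzero

theorem add_left (hf : HasLeadingIndex p m s f) (hg : p ^ (m + 1) • g = 0)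
    (hgs : Δ_[1] ^[s] (p ^ m • g) = 0) : HasLeadingIndex p m s (g + f) where
  pow_succ_smul := by rw [smul_add, hg, hf.pow_succ_smul, add_zero]
  fwdDiff_smul_eq_zero := by
    rw [smul_add, fwdDiff_iter_add, hf.fwdDiff_smul_eq_zero,
      fwdDiff_iter_eq_zero_of_le hgs s.le_succ, add_zero]
  fwdDiff_smul_ne_zero := by
    rw [smul_add, fwdDiff_iter_add, hgs, zero_add]
    exact hf.fwdDiff_smul_ne_zero

theorem of_fwdDiff_iter_apply_zero (hord : ∀ k, p ^ (m + 1) • Δ_[1] ^[k] f 0 = 0)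
    (hgt : ∀ k, s < k → p ^ m • Δ_[1] ^[k] f 0 = 0) (hs : p ^ m • Δ_[1] ^[s] f 0 ≠ 0) :
    HasLeadingIndex p m s f where
  pow_succ_smul := eq_zero_of_forall_fwdDiff_iter_apply_zero fun k ↦ by
    rw [fwdDiff_iter_const_smul, Pi.smul_apply, hord]
  fwdDiff_smul_eq_zero := eq_zero_of_forall_fwdDiff_iter_apply_zero fun k ↦ by
    rw [← iterate_add_apply, fwdDiff_iter_const_smul, Pi.smul_apply, hgt _ (by omega)]
  fwdDiff_smul_ne_zero h := hs <| by
    rw [← Pi.smul_apply, ← fwdDiff_iter_const_smul, h, Pi.zero_apply]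

theorem smul_fwdDiff_iter_apply_zero_ne_zero (hf : HasLeadingIndex p m s f) :
    p ^ m • Δ_[1] ^[s] f 0 ≠ 0 := fun h ↦
  hf.fwdDiff_smul_ne_zero <| eq_zero_of_forall_fwdDiff_iter_apply_zero fun k ↦ by
    obtain _ | k := k
    · rwa [iterate_zero, id, fwdDiff_iter_const_smul, Pi.smul_apply]
    · rw [← iterate_add_apply, fwdDiff_iter_eq_zero_of_le hf.fwdDiff_smul_eq_zero (by omega),
        Pi.zero_apply]

theorem const (hf : HasLeadingIndex p m s f) :
    HasLeadingIndex p m 0 (fun _ ↦ Δ_[1] ^[s] f 0) where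
  pow_succ_smul := by
    funext _
    rw [Pi.smul_apply, ← Pi.smul_apply, ← fwdDiff_iter_const_smul, hf.pow_succ_smul,
      fwdDiff_iter_zero, Pi.zero_apply, Pi.zero_apply]
  fwdDiff_smul_eq_zero := fwdDiff_const 1 _
  fwdDiff_smul_ne_zero h := hf.smul_fwdDiff_iter_apply_zero_ne_zero (congrFun h 0)

end HasLeadingIndex

end Leading

/-! ### The sum operator -/

section Sum

variable {M p m s : ℕ} {f : ℕ → ZMod M}

theorem deltaSeq_eq_fwdDiff : (deltaSeq : (ℕ → ZMod M) → ℕ → ZMod M) = Δ_[1] := rfl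

theorem sigmaSeq_eq_sum_range (f : ℕ → ZMod M) (n : ℕ) : sigmaSeq f n = ∑ i ∈ range n, f i := by
  induction n with
  | zero => rfl
  | succ n ih => rw [sum_range_succ, ← ih]; exact add_comm _ _

theorem leftInverse_fwdDiff_sigmaSeq :
    LeftInverse (fwdDiff 1) (sigmaSeq : (ℕ → ZMod M) → ℕ → ZMod M) := fun f ↦ by
  funext n
  exact add_sub_cancel_right (f n) (sigmaSeq f n)

theorem sigmaSeq_iterate_smul (c i : ℕ) (f : ℕ → ZMod M) :
    sigmaSeq^[i] (c • f) = c • sigmaSeq^[i] f := by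
  have hcomm : Function.Commute (sigmaSeq : (ℕ → ZMod M) → ℕ → ZMod M) (c • ·) := fun f ↦ by
    funext n
    simp only [sigmaSeq_eq_sum_range, Pi.smul_apply, smul_sum]
  exact hcomm.iterate_left i f

theorem sigmaSeq_iterate_zero (i : ℕ) : sigmaSeq^[i] (0 : ℕ → ZMod M) = 0 := by
  simpa only [zero_smul] using sigmaSeq_iterate_smul 0 i (0 : ℕ → ZMod M)

theorem fwdDiff_iter_add_sigmaSeq_iterate (k i : ℕ) (f : ℕ → ZMod M) :
    Δ_[1] ^[k + i] (sigmaSeq^[i] f) = Δ_[1] ^[k] f := by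
  rw [iterate_add_apply, leftInverse_fwdDiff_sigmaSeq.iterate i f]

theorem fwdDiff_iter_sum_sigmaSeq_eq_zero {K t : ℕ} (hf : Δ_[1] ^[K] f = 0) :
    Δ_[1] ^[K + t] (∑ i ∈ range (t + 1), sigmaSeq^[i] f) = 0 := by
  rw [fwdDiff_iter_finsetSum]
  refine sum_eq_zero fun i hi ↦ ?_
  have hit : i ≤ t := mem_range_succ_iff.1 hi
  rw [← Nat.sub_add_cancel hit, ← add_assoc, fwdDiff_iter_add_sigmaSeq_iterate,
    fwdDiff_iter_eq_zero_of_le hf (Nat.le_add_right ..)]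

namespace HasLeadingIndex

theorem sigmaSeq_iterate (hf : HasLeadingIndex p m s f) (i : ℕ) :
    HasLeadingIndex p m (s + i) (sigmaSeq^[i] f) where
  pow_succ_smul := by
    rw [← sigmaSeq_iterate_smul, hf.pow_succ_smul, sigmaSeq_iterate_zero]
  fwdDiff_smul_eq_zero := by
    rw [← sigmaSeq_iterate_smul, add_right_comm, fwdDiff_iter_add_sigmaSeq_iterate]
    exact hf.fwdDiff_smul_eq_zero
  fwdDiff_smul_ne_zero := by
    rw [← sigmaSeq_iterate_smul, fwdDiff_iter_add_sigmaSeq_iterate]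
    exact hf.fwdDiff_smul_ne_zero

theorem sum_sigmaSeq (hf : HasLeadingIndex p m s f) (t : ℕ) :
    HasLeadingIndex p m (s + t) (∑ i ∈ range (t + 1), sigmaSeq^[i] f) := by
  rw [sum_range_succ]
  obtain _ | t := t
  · simpa using hf
  refine (hf.sigmaSeq_iterate (t + 1)).add_left ?_ ?_
  · simp only [smul_sum, ← sigmaSeq_iterate_smul, hf.pow_succ_smul, sigmaSeq_iterate_zero,
      sum_const_zero]
  · simp only [smul_sum, ← sigmaSeq_iterate_smul]
    rw [← add_assoc, add_right_comm]
    exact fwdDiff_iter_sum_sigmaSeq_eq_zero hf.fwdDiff_smul_eq_zero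

end HasLeadingIndex

end Sum

/-! ### Periods -/

section Period

variable {M p m s K : ℕ} {f : ℕ → ZMod M}

theorem isPeriodicPt_shiftSeq_iff (f : ℕ → ZMod M) (j : ℕ) :
    IsPeriodicPt shiftSeq j f ↔ Periodic f j := by
  have hiter : shiftSeq^[j] f = fun n ↦ f (n + j) := by
    induction j with
    | zero => rfl
    | succ j ih =>
      rw [iterate_succ_apply', ih]
      funext n
      rw [shiftSeq, add_right_comm, add_assoc]
  rw [IsPeriodicPt, IsFixedPt, hiter, funext_iff]
  rfl

theorem perSeq_eq_minimalPeriod (f : ℕ → ZMod M) : perSeq f = minimalPeriod shiftSeq f := by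
  rw [minimalPeriod_eq_sInf_n_pos_IsPeriodicPt, perSeq]
  simp only [isPeriodicPt_shiftSeq_iff, Nat.one_le_iff_ne_zero, gt_iff_lt, Nat.pos_iff_ne_zero]

theorem perSeq_eq_prime_pow (hp : p.Prime) {N : ℕ} (hnot : ¬ Periodic f (p ^ N))
    (hper : Periodic f (p ^ (N + 1))) : perSeq f = p ^ (N + 1) := by
  have := Fact.mk hp
  rw [perSeq_eq_minimalPeriod]
  rw [← isPeriodicPt_shiftSeq_iff] at hnot hper
  exact minimalPeriod_eq_prime_pow hnot hper

namespace HasLeadingIndex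

theorem perSeq_eq (hp : p.Prime) (hf : HasLeadingIndex p m s f) (hs : s ≠ 0)
    (hK : Δ_[1] ^[K] f = 0) (hKs : K + p ^ Nat.log p s ≤ p ^ (Nat.log p s + 1) + s) :
    perSeq f = p ^ (m + Nat.log p s + 1) := by
  have hlow : p ^ Nat.log p s ≤ s := Nat.pow_log_le_self p hs
  have hupp : s < p ^ (Nat.log p s + 1) := Nat.lt_pow_succ_log_self hp.one_lt s
  have hstep : 2 * p ^ (Nat.log p s + 1) ≤ p ^ (Nat.log p s + 2) := by
    rw [pow_succ' p (Nat.log p s + 1)]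
    exact Nat.mul_le_mul_right _ hp.two_le
  refine perSeq_eq_prime_pow hp (hf.not_periodic hp hK hlow hKs) ?_
  rw [add_right_comm]
  exact hf.periodic hp hK hupp (by omega)

theorem perSeq_sigmaSeq_iterate_const (hp : p.Prime) {c : ZMod M}
    (hc : HasLeadingIndex p m 0 (fun _ : ℕ ↦ c)) (hs : s ≠ 0) :
    perSeq (sigmaSeq^[s] fun _ ↦ c) = p ^ (m + Nat.log p s + 1) := by
  have hlead := hc.sigmaSeq_iterate s
  rw [zero_add] at hlead
  have hnil : Δ_[1] ^[1 + s] (sigmaSeq^[s] fun _ ↦ c) = 0 := by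
    rw [fwdDiff_iter_add_sigmaSeq_iterate]
    exact fwdDiff_const 1 c
  have hlt : p ^ Nat.log p s < p ^ (Nat.log p s + 1) :=
    Nat.pow_lt_pow_right hp.one_lt (Nat.lt_succ_self _)
  exact hlead.perSeq_eq hp hs hnil (by omega)

theorem perSeq_sum_sigmaSeq (hp : p.Prime) (hf : HasLeadingIndex p m s f) (hK : Δ_[1] ^[K] f = 0)
    {t : ℕ} (ht : p * K ≤ s + t) (hst : s + t ≠ 0) :
    perSeq (∑ i ∈ range (t + 1), sigmaSeq^[i] f) = p ^ (m + Nat.log p (s + t) + 1) := by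
  refine (hf.sum_sigmaSeq t).perSeq_eq hp hst (fwdDiff_iter_sum_sigmaSeq_eq_zero hK) ?_
  have hKL : K < p ^ Nat.log p (s + t) := by
    refine Nat.lt_of_mul_lt_mul_left (a := p) ?_
    rw [← pow_succ']
    exact ht.trans_lt (Nat.lt_pow_succ_log_self hp.one_lt _)
  have hstep : 2 * p ^ Nat.log p (s + t) ≤ p ^ (Nat.log p (s + t) + 1) := by
    rw [pow_succ']
    exact Nat.mul_le_mul_right _ hp.two_le
  omega

end HasLeadingIndex

end Period

/-! ### Valuations -/

section Valuation

variable {p l : ℕ}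

theorem pow_smul_eq_zero_iff_le_add_nuVal (hp : p.Prime) (j : ℕ) (x : ZMod (p ^ l)) :
    p ^ j • x = 0 ↔ (l : ℕ∞) ≤ j + nuVal p x := by
  have := Fact.mk hp
  have : NeZero (p ^ l) := ⟨pow_ne_zero l hp.ne_zero⟩
  obtain rfl | hx := eq_or_ne x 0
  · simp [nuVal]
  have hval : x.val ≠ 0 := (ZMod.val_ne_zero x).2 hx
  have hpj : p ^ j ≠ 0 := pow_ne_zero j hp.ne_zero
  calc p ^ j • x = 0 ↔ ((p ^ j * x.val : ℕ) : ZMod (p ^ l)) = 0 := by simp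
    _ ↔ l ≤ padicValNat p (p ^ j * x.val) := by
        rw [ZMod.natCast_eq_zero_iff, padicValNat_dvd_iff_le (mul_ne_zero hpj hval)]
    _ ↔ (l : ℕ∞) ≤ j + nuVal p x := by
        rw [padicValNat.mul hpj hval, padicValNat.prime_pow, nuVal, if_neg hx]
        norm_cast

theorem exists_nuVal_add_eq (hp : p.Prime) {x : ZMod (p ^ l)} (hx : x ≠ 0) :
    ∃ m : ℕ, nuVal p x + m + 1 = l := by
  have hlt : nuVal p x < l := by
    simpa using (pow_smul_eq_zero_iff_le_add_nuVal hp 0 x).not.1 (by simpa using hx)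
  lift nuVal p x to ℕ using hlt.ne_top with v
  obtain ⟨m, rfl⟩ := Nat.exists_eq_add_of_lt (Nat.cast_lt.1 hlt)
  exact ⟨m, by norm_cast⟩

theorem exists_hasLeadingIndex {f : ℕ → ZMod (p ^ l)} {η γ : ℕ} (hp : p.Prime) (hf0 : f ≠ 0)
    (hnil : Δ_[1] ^[η] f = 0)
    (hlead₁ : ∀ i < η, nuVal p (Δ_[1] ^[γ] f 0) ≤ nuVal p (Δ_[1] ^[i] f 0))
    (hlead₂ : ∀ i, γ < i → i < η → nuVal p (Δ_[1] ^[γ] f 0) < nuVal p (Δ_[1] ^[i] f 0)) :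
    ∃ m, HasLeadingIndex p m γ f := by
  have htail : ∀ i, η ≤ i → Δ_[1] ^[i] f 0 = 0 := fun i hi ↦
    congrFun (fwdDiff_iter_eq_zero_of_le hnil hi) 0
  have hγ : Δ_[1] ^[γ] f 0 ≠ 0 := by
    refine fun hγ ↦ hf0 (eq_zero_of_forall_fwdDiff_iter_apply_zero fun i ↦ ?_)
    obtain hi | hi := lt_or_ge i η
    · by_contra hne
      simpa [nuVal, hγ, hne] using hlead₁ i hi
    · exact htail i hi
  obtain ⟨m, hm⟩ := exists_nuVal_add_eq hp hγ
  refine ⟨m, .of_fwdDiff_iter_apply_zero (fun i ↦ ?_) (fun i hi ↦ ?_) ?_⟩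
  · obtain hiη | hiη := lt_or_ge i η
    · rw [pow_smul_eq_zero_iff_le_add_nuVal hp, ← hm, add_assoc, add_comm]
      exact add_le_add_right (hlead₁ i hiη) _
    · rw [htail i hiη, smul_zero]
  · obtain hiη | hiη := lt_or_ge i η
    · rw [pow_smul_eq_zero_iff_le_add_nuVal hp, ← hm, add_right_comm, add_comm]
      exact add_le_add_right (Order.add_one_le_of_lt (hlead₂ i hi hiη)) _
    · rw [htail i hiη, smul_zero]
  · have hfin : nuVal p (Δ_[1] ^[γ] f 0) ≠ ⊤ := by simp [nuVal, hγ]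
    lift nuVal p (Δ_[1] ^[γ] f 0) to ℕ using hfin with v hv
    rw [Ne, pow_smul_eq_zero_iff_le_add_nuVal hp, ← hm, ← hv]
    norm_cast
    omega

end Valuation

/-- for a nonzero nilpotent sequence with leading component `e_γ`, for all
sufficiently large `t` the period of `∑_{i=0}^{t} Σ^i f` equals the period of
`Σ^{t+γ}[e_γ]`. -/
theorem stmt12 (p l : ℕ) (hp : p.Prime) (hl : 1 ≤ l)
    (f : ℕ → ZMod (p ^ l)) (hf : IsPeriodicSeq f) (hf0 : f ≠ 0)
    (η : ℕ) (hη : 1 ≤ η) (hnil : deltaSeq^[η] f = 0)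
    (hmin : ∀ k, 1 ≤ k → deltaSeq^[k] f = 0 → η ≤ k)
    (γ : ℕ) (hγη : γ < η)
    (hlead₁ : ∀ i < η, nuVal p (deltaSeq^[γ] f 0) ≤ nuVal p (deltaSeq^[i] f 0))
    (hlead₂ : ∀ i, γ < i → i < η → nuVal p (deltaSeq^[γ] f 0) < nuVal p (deltaSeq^[i] f 0)) :
    ∃ T : ℕ, ∀ t : ℕ, T ≤ t →
      perSeq (∑ i ∈ Finset.range (t + 1), sigmaSeq^[i] f)
        = perSeq (sigmaSeq^[t + γ] (fun _ => deltaSeq^[γ] f 0)) := by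
  rw [deltaSeq_eq_fwdDiff] at hnil hlead₁ hlead₂ ⊢
  obtain ⟨m, hlead⟩ := exists_hasLeadingIndex hp hf0 hnil hlead₁ hlead₂
  refine ⟨p * η, fun t ht ↦ ?_⟩
  have hη0 : 0 < p * η := Nat.mul_pos hp.pos hη
  rw [add_comm t γ, hlead.perSeq_sum_sigmaSeq hp hnil (le_add_left ht) (by omega),
    hlead.const.perSeq_sigmaSeq_iterate_const hp (by omega)]
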